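/- The lower asymptotic density of the set of strongly matchable positive integers is greater than 4/11, i.e., liminf_{x→∞} #{n ≤ x : n is strongly matchable}/x > 4/11. -/

import Mathlib

/-- A coprime matching from a finite set `A` of positive integers to a finite set `B`
is a bijection `ψ : A → B` with `gcd(a, ψ(a)) = 1` for every `a ∈ A`. -/
def CoprimeMatching (A B : Finset ℕ) : Prop :=
  ∃ ψ : ℕ → ℕ, Set.BijOn ψ ↑A ↑B ∧ ∀ a ∈ A, Nat.gcd a (ψ a) = 1

/-- A positive integer `n` is strongly matchable if for every arithmetic progression
`{a, a+d, ..., a+(τ(n)-1)d}` of `τ(n)` positive integers with `gcd(a,d) = 1`, there is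
a coprime matching from the set of divisors of `n` to it. -/
def StronglyMatchable (n : ℕ) : Prop :=
  ∀ a d : ℕ, 0 < a → 0 < d → Nat.gcd a d = 1 →
    CoprimeMatching n.divisors
      ((Finset.range n.divisors.card).image (fun i => a + i * d))

/-!
Suppose `m` is strongly matchable and `p ∤ m` is prime. The divisors of `p * m` are those of `m` and
their multiples by `p`, so it is enough to split a progression of length `2 * τ(m)` into two
progressions of length `τ(m)`, each matchable with `D(m)`, one of which avoids the multiples of `p`:
this one is also matchable with `p * D(m)`. If `2 * τ(m) ≤ p`, the progression contains at most one
multiple of `p`, so that its first and second half are as wanted. If `p = 2`, the terms of even and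
of odd index are, whatever the size of `τ(m)`.

Adding the odd prime factors in increasing order and then possibly `2`, a squarefree `n` is strongly
matchable unless for some `j ≥ 1` it has at least `j` odd prime factors below `2 ^ j`; call it
crowded at level `j` in that case. At most half of the integers up to `x` are divisible by `4` or by
the square of an odd number `≥ 3`. Rankin's trick with weight `5` bounds the proportion of those
crowded at level `j` by `B j = 5⁻ʲ * ∏ (1 + 4 / p)`, over odd primes `p < 2 ^ j`. As
`1 + 4 / p ≤ ((p + 1) / (p - 1)) ^ 2`, and the product of the latter over the odd numbers between
`2 ^ j` and `2 ^ (j + 1)` telescopes to `4`, we have `B (j + 1) ≤ 4 / 5 * B j`. No integer is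
crowded at level `1` or `2`, and `B 3 + B 4 + 5 * B 5 < 1 / 8`, so the density is at least
`1 - 1 / 2 - 1 / 8 = 3 / 8`.
-/

section

open Finset

/-! ### Coprime matchings -/

namespace CoprimeMatching

variable {A A' B B' : Finset ℕ} {c : ℕ}

lemma symm (h : CoprimeMatching A B) : CoprimeMatching B A := by
  obtain ⟨ψ, hψ, hcop⟩ := h
  have hinv := hψ.invOn_invFunOn
  have hbij := hψ.symm hinv.symm
  refine ⟨Function.invFunOn ψ A, hbij, fun b hb => ?_⟩
  have := hcop _ (hbij.mapsTo hb)
  rwa [hinv.2 hb, Nat.gcd_comm] at this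

lemma union (h : CoprimeMatching A B) (h' : CoprimeMatching A' B') (hA : Disjoint A A')
    (hB : Disjoint B B') : CoprimeMatching (A ∪ A') (B ∪ B') := by
  classical
  obtain ⟨f, hf, hfc⟩ := h
  obtain ⟨g, hg, hgc⟩ := h'
  set ψ := (A : Set ℕ).piecewise f g
  have hψf : Set.EqOn ψ f A := Set.piecewise_eqOn _ f g
  have hψg : Set.EqOn ψ g A' := (Set.piecewise_eqOn_compl _ f g).mono
    (Set.disjoint_left.mp (disjoint_coe.mpr hA).symm)
  have hbij : Set.BijOn ψ A B := hf.congr hψf.symm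
  have hbij' : Set.BijOn ψ A' B' := hg.congr hψg.symm
  refine ⟨ψ, ?_, fun a ha => ?_⟩
  · rw [coe_union, coe_union]
    refine hbij.union hbij' ((Set.injOn_union (disjoint_coe.mpr hA)).mpr
      ⟨hbij.injOn, hbij'.injOn, fun a ha a' ha' => ?_⟩)
    exact disjoint_iff_ne.mp hB _ (hbij.mapsTo ha) _ (hbij'.mapsTo ha')
  · rcases mem_union.mp ha with ha | ha
    · rw [hψf ha, hfc a ha]
    · rw [hψg ha, hgc a ha]

lemma image_mul_right (h : CoprimeMatching A B) (hc : c ≠ 0) (hA : ∀ a ∈ A, Nat.Coprime a c) :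
    CoprimeMatching A (B.image (c * ·)) := by
  obtain ⟨ψ, hψ, hcop⟩ := h
  refine ⟨fun a => c * ψ a, ?_, fun a ha => (hA a ha).mul_right (hcop a ha)⟩
  rw [coe_image]
  exact (mul_right_injective₀ hc).injOn.bijOn_image.comp hψ

lemma image_mul_left (h : CoprimeMatching A B) (hc : c ≠ 0) (hB : ∀ b ∈ B, Nat.Coprime b c) :
    CoprimeMatching (A.image (c * ·)) B :=
  (h.symm.image_mul_right hc hB).symm

end CoprimeMatching

section PrimeMul

variable {p m : ℕ}

lemma divisors_prime_mul_eq_union (hp : p.Prime) :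
    (p * m).divisors = m.divisors ∪ m.divisors.image (p * ·) := by
  rw [Nat.divisors_mul, hp.divisors]
  change image₂ (· * ·) _ _ = _
  simp only [image₂_insert_left, image₂_singleton_left, one_mul, image_id']

lemma card_divisors_prime_mul (hp : p.Prime) (hpm : ¬ p ∣ m) :
    #(p * m).divisors = 2 * #m.divisors := by
  rw [(hp.coprime_iff_not_dvd.mpr hpm).card_divisors_mul, hp.divisors, card_pair hp.one_lt.ne]

lemma CoprimeMatching.divisors_prime_mul {B B' : Finset ℕ} (hp : p.Prime) (hpm : ¬ p ∣ m)
    (hB : CoprimeMatching m.divisors B) (hB' : CoprimeMatching m.divisors B')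
    (hdisj : Disjoint B B') (havoid : (∀ b ∈ B, ¬ p ∣ b) ∨ ∀ b ∈ B', ¬ p ∣ b) :
    CoprimeMatching (p * m).divisors (B ∪ B') := by
  wlog h : ∀ b ∈ B', ¬ p ∣ b generalizing B B'
  · rw [union_comm]
    exact this hB' hB hdisj.symm havoid.symm (havoid.resolve_right h)
  have hD : Disjoint m.divisors (m.divisors.image (p * ·)) := by
    refine disjoint_left.mpr fun t ht ht' => ?_
    obtain ⟨u, -, rfl⟩ := mem_image.mp ht'
    exact hpm ((dvd_mul_right p u).trans (Nat.dvd_of_mem_divisors ht))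
  rw [divisors_prime_mul_eq_union hp]
  exact hB.union (hB'.image_mul_left hp.ne_zero fun b hb =>
    (hp.coprime_iff_not_dvd.mpr (h b hb)).symm) hD hdisj

end PrimeMul

/-! ### Arithmetic progressions -/

/-- The arithmetic progression `{a, a + d, ..., a + (k - 1) * d}`, in the form in which it occurs in
`StronglyMatchable`. -/
def progression (a d k : ℕ) : Finset ℕ := (range k).image (fun i => a + i * d)

section Progression

variable {a d k : ℕ}

lemma mem_progression {t : ℕ} : t ∈ progression a d k ↔ ∃ i < k, a + i * d = t := by
  simp only [progression, mem_image, mem_range]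

lemma progression_mul_left (c : ℕ) :
    progression (c * a) (c * d) k = (progression a d k).image (c * ·) := by
  simp only [progression, image_image]
  exact image_congr fun i _ => by simp only [Function.comp]; ring

lemma progression_two_mul_eq_union_halves :
    progression a d (2 * k) = progression a d k ∪ progression (a + k * d) d k := by
  ext t
  simp only [mem_union, mem_progression]
  constructor
  · rintro ⟨i, hi, rfl⟩
    rcases lt_or_ge i k with h | h
    · exact Or.inl ⟨i, h, rfl⟩
    · obtain ⟨j, rfl⟩ := Nat.exists_eq_add_of_le h
      exact Or.inr ⟨j, by omega, by ring⟩
  · rintro (⟨i, hi, rfl⟩ | ⟨i, hi, rfl⟩)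
    · exact ⟨i, by omega, rfl⟩
    · exact ⟨k + i, by omega, by ring⟩

lemma disjoint_progression_halves (hd : 0 < d) :
    Disjoint (progression a d k) (progression (a + k * d) d k) := by
  simp only [disjoint_left, mem_progression]
  rintro _ ⟨i, hi, rfl⟩ ⟨j, -, h⟩
  have : (k + j) * d = i * d := by linarith
  have := Nat.eq_of_mul_eq_mul_right hd this
  omega

lemma progression_two_mul_eq_union_parity :
    progression a d (2 * k) = progression a (2 * d) k ∪ progression (a + d) (2 * d) k := by
  ext t
  simp only [mem_union, mem_progression]
  constructor
  · rintro ⟨i, hi, rfl⟩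
    rcases Nat.even_or_odd' i with ⟨c, rfl | rfl⟩
    · exact Or.inl ⟨c, by omega, by ring⟩
    · exact Or.inr ⟨c, by omega, by ring⟩
  · rintro (⟨i, hi, rfl⟩ | ⟨i, hi, rfl⟩)
    · exact ⟨2 * i, by omega, by ring⟩
    · exact ⟨2 * i + 1, by omega, by ring⟩

lemma disjoint_progression_parity (hd : 0 < d) :
    Disjoint (progression a (2 * d) k) (progression (a + d) (2 * d) k) := by
  simp only [disjoint_left, mem_progression]
  rintro _ ⟨i, -, rfl⟩ ⟨j, -, h⟩
  have : (2 * j + 1) * d = 2 * i * d := by linarith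
  have := Nat.eq_of_mul_eq_mul_right hd this
  omega

lemma index_eq_of_prime_dvd {p i j : ℕ} (hp : p.Prime) (had : Nat.Coprime a d)
    (hi : i < p) (hj : j < p) (hpi : p ∣ a + i * d) (hpj : p ∣ a + j * d) : i = j := by
  have hpd : ¬ p ∣ d := fun hpd =>
    Nat.not_coprime_of_dvd_of_dvd hp.one_lt
      ((Nat.dvd_add_left (hpd.mul_left i)).mp hpi) hpd had
  have hmod : i * d ≡ j * d [MOD p] :=
    Nat.ModEq.add_left_cancel' a
      ((Nat.modEq_zero_iff_dvd.mpr hpi).trans (Nat.modEq_zero_iff_dvd.mpr hpj).symm)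
  exact (hmod.cancel_right_of_coprime (hp.coprime_iff_not_dvd.mpr hpd)).eq_of_lt_of_lt hi hj

end Progression

/-! ### Strongly matchable integers -/

lemma stronglyMatchable_one : StronglyMatchable 1 := fun a _ _ _ _ =>
  ⟨fun _ => a, by simp, by simp⟩

namespace StronglyMatchable

variable {m p : ℕ}

lemma prime_mul (h : StronglyMatchable m) (hp : p.Prime) (hpm : ¬ p ∣ m)
    (hle : 2 * #m.divisors ≤ p) : StronglyMatchable (p * m) := by
  intro a d ha hd had
  rw [card_divisors_prime_mul hp hpm]
  change CoprimeMatching _ (progression a d (2 * #m.divisors))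
  rw [progression_two_mul_eq_union_halves]
  refine CoprimeMatching.divisors_prime_mul hp hpm (h a d ha hd had)
    (h _ d (by omega) hd (by simpa using had)) (disjoint_progression_halves hd) ?_
  by_contra! hboth
  simp only [mem_progression] at hboth
  obtain ⟨⟨_, ⟨i, hi, rfl⟩, hpi⟩, _, ⟨j, hj, rfl⟩, hpj⟩ := hboth
  rw [add_assoc, ← add_mul] at hpj
  have := index_eq_of_prime_dvd hp had (by omega) (by omega) hpi hpj
  omega

/-- If `p ∣ a` then all terms are divisible by `p`; this factor is coprime to the divisors of `m`,
and dividing it out leaves a progression of difference `d`. -/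
lemma coprimeMatching_progression_prime_mul (h : StronglyMatchable m) (hp : p.Prime) (hpm : ¬ p ∣ m)
    {a d : ℕ} (ha : 0 < a) (hd : 0 < d) (had : Nat.Coprime a d) :
    CoprimeMatching m.divisors (progression a (p * d) #m.divisors) := by
  by_cases hpa : p ∣ a
  · obtain ⟨b, rfl⟩ := hpa
    rw [progression_mul_left]
    refine CoprimeMatching.image_mul_right
      (h b d (Nat.pos_of_mul_pos_left ha) hd had.coprime_mul_left) hp.ne_zero fun t ht => ?_
    exact (hp.coprime_iff_not_dvd.mpr fun hpt =>
      hpm (hpt.trans (Nat.dvd_of_mem_divisors ht))).symm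
  · exact h a (p * d) ha (Nat.mul_pos hp.pos hd)
      ((hp.coprime_iff_not_dvd.mpr hpa).symm.mul_right had)

lemma two_mul (h : StronglyMatchable m) (hm : Odd m) : StronglyMatchable (2 * m) := by
  have h2m : ¬ 2 ∣ m := hm.not_two_dvd_nat
  intro a d ha hd had
  rw [card_divisors_prime_mul Nat.prime_two h2m]
  change CoprimeMatching _ (progression a d (2 * #m.divisors))
  rw [progression_two_mul_eq_union_parity]
  refine CoprimeMatching.divisors_prime_mul Nat.prime_two h2m
    (h.coprimeMatching_progression_prime_mul Nat.prime_two h2m ha hd had)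
    (h.coprimeMatching_progression_prime_mul Nat.prime_two h2m (by omega) hd (by simpa using had))
    (disjoint_progression_parity hd) ?_
  have hodd : ∀ b, ¬ 2 ∣ b → ∀ t ∈ progression b (2 * d) #m.divisors, ¬ 2 ∣ t := by
    intro b hb t ht
    obtain ⟨i, -, rfl⟩ := mem_progression.mp ht
    rwa [Nat.dvd_add_left ((dvd_mul_right 2 d).mul_left i)]
  have hor : ¬ 2 ∣ a ∨ ¬ 2 ∣ a + d := by
    by_contra! hboth
    exact Nat.not_coprime_of_dvd_of_dvd one_lt_two hboth.1 ((Nat.dvd_add_right hboth.1).mp hboth.2)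
      had
  exact hor.imp (hodd a) (hodd (a + d))

end StronglyMatchable

/-! ### Squarefree integers without too many small prime factors -/

/-- The odd primes less than `N`. -/
def oddPrimesBelow (N : ℕ) : Finset ℕ := N.primesBelow.erase 2

lemma mem_oddPrimesBelow {N p : ℕ} : p ∈ oddPrimesBelow N ↔ p ≠ 2 ∧ p < N ∧ p.Prime := by
  rw [oddPrimesBelow, mem_erase, Nat.mem_primesBelow]

lemma oddPrimesBelow_mono : Monotone oddPrimesBelow := fun _ _ h =>
  erase_subset_erase 2 (Nat.primesBelow_mono h)

/-- The obstruction at level `j` to strong matchability of a squarefree `n`: too many odd primes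
below `2 ^ j` divide `n`. -/
def CrowdedAt (j n : ℕ) : Prop := j ≤ #{p ∈ oddPrimesBelow (2 ^ j) | p ∣ n}

instance (j : ℕ) : DecidablePred (CrowdedAt j) := fun _ => Nat.decLe _ _

namespace CrowdedAt

variable {j m n : ℕ}

lemma of_dvd (h : CrowdedAt j m) (hmn : m ∣ n) : CrowdedAt j n :=
  h.trans (card_le_card (monotone_filter_right _ fun _ _ hp => hp.trans hmn))

lemma three_le (h : CrowdedAt j n) (hj : 0 < j) : 3 ≤ j := by
  by_contra! hlt
  have hcard : #(oddPrimesBelow (2 ^ j)) < j := by interval_cases j <;> decide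
  exact (h.trans (card_filter_le _ _)).not_gt hcard

lemma level_le (h : CrowdedAt j n) (hn : 0 < n) : j ≤ n := by
  have hsub : {p ∈ oddPrimesBelow (2 ^ j) | p ∣ n} ⊆ Icc 1 n := fun p hp => by
    rw [mem_filter, mem_oddPrimesBelow] at hp
    exact mem_Icc.mpr ⟨hp.1.2.2.pos, Nat.le_of_dvd hn hp.2⟩
  exact h.trans ((card_le_card hsub).trans_eq (Nat.card_Icc 1 n))

end CrowdedAt

lemma card_divisors_of_squarefree {n : ℕ} (hn : Squarefree n) :
    #n.divisors = 2 ^ #n.primeFactors := by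
  rw [Nat.card_divisors hn.ne_zero]
  refine prod_eq_pow_card fun p hp => ?_
  rw [Nat.factorization_eq_one_of_squarefree hn (Nat.prime_of_mem_primeFactors hp)
    (Nat.dvd_of_mem_primeFactors hp)]

lemma exists_prime_dvd_card_divisors_le {n : ℕ} (hodd : Odd n) (hsq : Squarefree n) (hn : n ≠ 1)
    (hc : ∀ j, 0 < j → ¬ CrowdedAt j n) : ∃ p, p.Prime ∧ p ∣ n ∧ #n.divisors ≤ p := by
  have hn0 := hodd.pos
  have hpos : 0 < #n.primeFactors := card_pos.mpr (Nat.nonempty_primeFactors.mpr (by omega))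
  obtain ⟨p, hp, hp'⟩ := exists_mem_notMem_of_card_lt_card (not_le.mp (hc _ hpos))
  obtain ⟨hprime, hdvd, -⟩ := Nat.mem_primeFactors.mp hp
  refine ⟨p, hprime, hdvd, ?_⟩
  rw [card_divisors_of_squarefree hsq]
  by_contra! hlt
  refine hp' (mem_filter.mpr ⟨mem_oddPrimesBelow.mpr ⟨?_, hlt, hprime⟩, hdvd⟩)
  rintro rfl
  exact hodd.not_two_dvd_nat hdvd

lemma stronglyMatchable_of_odd_squarefree {n : ℕ} (hodd : Odd n) (hsq : Squarefree n)
    (hc : ∀ j, 0 < j → ¬ CrowdedAt j n) : StronglyMatchable n := by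
  induction n using Nat.strong_induction_on with
  | _ n ih =>
    rcases eq_or_ne n 1 with rfl | hn
    · exact stronglyMatchable_one
    obtain ⟨p, hp, ⟨m, rfl⟩, hle⟩ := exists_prime_dvd_card_divisors_le hodd hsq hn hc
    have hpm : ¬ p ∣ m := hp.coprime_iff_not_dvd.mp (Nat.coprime_of_squarefree_mul hsq)
    have hmodd : Odd m := (Nat.odd_mul.mp hodd).2
    rw [card_divisors_prime_mul hp hpm] at hle
    exact (ih m (lt_mul_of_one_lt_left hmodd.pos hp.one_lt) hmodd hsq.of_mul_right
      fun j hj h => hc j hj (h.of_dvd (dvd_mul_left m p))).prime_mul hp hpm hle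

lemma stronglyMatchable_of_squarefree {n : ℕ} (hsq : Squarefree n)
    (hc : ∀ j, 0 < j → ¬ CrowdedAt j n) : StronglyMatchable n := by
  rcases n.even_or_odd with heven | hodd
  · obtain ⟨m, rfl⟩ := heven.two_dvd
    have hm : Odd m := Nat.coprime_two_left.mp (Nat.coprime_of_squarefree_mul hsq)
    exact (stronglyMatchable_of_odd_squarefree hm hsq.of_mul_right
      fun j hj h => hc j hj (h.of_dvd (dvd_mul_left m 2))).two_mul hm
  · exact stronglyMatchable_of_odd_squarefree hodd hsq hc

/-! ### Rankin's bound -/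

lemma card_filter_dvd_le (x m : ℕ) : (#{n ∈ Icc 1 x | m ∣ n} : ℝ) ≤ x / m := by
  have hIcc : Icc 1 x = Ioc 0 x := Icc_succ_left_eq_Ioc 0 x
  rw [hIcc, Nat.Ioc_filter_dvd_card_eq_div]
  exact Nat.cast_div_le

lemma pow_card_filter_eq_sum_powerset {ι R : Type*} [CommRing R] (s : Finset ι) (q : ι → Prop)
    [DecidablePred q] (z : R) :
    z ^ #{i ∈ s | q i} = ∑ t ∈ s.powerset, if ∀ i ∈ t, q i then (z - 1) ^ #t else 0 := by
  calc z ^ #{i ∈ s | q i} = ∏ i ∈ s, if q i then z else 1 := by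
        rw [← prod_const, prod_filter]
    _ = ∏ i ∈ s, (1 + if q i then z - 1 else 0) :=
        prod_congr rfl fun i _ => by split_ifs <;> ring
    _ = ∑ t ∈ s.powerset, if ∀ i ∈ t, q i then (z - 1) ^ #t else 0 := by
        simp only [prod_one_add, prod_ite_zero, prod_const]

section Rankin

variable {P : Finset ℕ} {z : ℝ}

lemma card_filter_forall_dvd_le (hP : (P : Set ℕ).Pairwise Nat.Coprime) (x : ℕ) :
    (#{n ∈ Icc 1 x | ∀ p ∈ P, p ∣ n} : ℝ) ≤ x / ∏ p ∈ P, (p : ℝ) := by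
  have hprod : ∀ n, (∀ p ∈ P, p ∣ n) → ∏ p ∈ P, p ∣ n := fun n =>
    prod_dvd_of_isRelPrime fun p hp q hq hpq => Nat.coprime_iff_isRelPrime.mp (hP hp hq hpq)
  calc (#{n ∈ Icc 1 x | ∀ p ∈ P, p ∣ n} : ℝ) ≤ #{n ∈ Icc 1 x | ∏ p ∈ P, p ∣ n} := by
        exact_mod_cast card_le_card (monotone_filter_right _ fun n _ => hprod n)
    _ ≤ x / ∏ p ∈ P, (p : ℝ) := by
        simpa only [Nat.cast_prod] using card_filter_dvd_le x (∏ p ∈ P, p)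

lemma sum_pow_card_filter_dvd_le (hP : (P : Set ℕ).Pairwise Nat.Coprime) (hz : 1 ≤ z) (x : ℕ) :
    ∑ n ∈ Icc 1 x, z ^ #{p ∈ P | p ∣ n} ≤ x * ∏ p ∈ P, (1 + (z - 1) / p) := by
  have := sub_nonneg.mpr hz
  calc ∑ n ∈ Icc 1 x, z ^ #{p ∈ P | p ∣ n}
      = ∑ S ∈ P.powerset, ∑ n ∈ Icc 1 x, if ∀ p ∈ S, p ∣ n then (z - 1) ^ #S else 0 := by
        simp only [pow_card_filter_eq_sum_powerset]
        exact sum_comm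
    _ = ∑ S ∈ P.powerset, (z - 1) ^ #S * #{n ∈ Icc 1 x | ∀ p ∈ S, p ∣ n} := by
        refine sum_congr rfl fun S _ => ?_
        rw [← sum_filter, sum_const, nsmul_eq_mul, mul_comm]
    _ ≤ ∑ S ∈ P.powerset, (z - 1) ^ #S * (x / ∏ p ∈ S, (p : ℝ)) := by
        gcongr with S hS
        exact card_filter_forall_dvd_le (hP.mono (coe_subset.mpr (mem_powerset.mp hS))) x
    _ = x * ∏ p ∈ P, (1 + (z - 1) / p) := by
        rw [prod_one_add, mul_sum]
        refine sum_congr rfl fun S _ => ?_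
        rw [prod_div_distrib, prod_const]
        ring

lemma card_filter_le_card_filter_dvd_le (hP : (P : Set ℕ).Pairwise Nat.Coprime) (hz : 1 ≤ z)
    (j x : ℕ) :
    (#{n ∈ Icc 1 x | j ≤ #{p ∈ P | p ∣ n}} : ℝ) ≤ x * ((∏ p ∈ P, (1 + (z - 1) / p)) / z ^ j) := by
  have := one_pos.trans_le hz
  rw [← mul_div_assoc, le_div_iff₀ (by positivity)]
  calc (#{n ∈ Icc 1 x | j ≤ #{p ∈ P | p ∣ n}} : ℝ) * z ^ j
      = ∑ n ∈ Icc 1 x with j ≤ #{p ∈ P | p ∣ n}, z ^ j := by rw [sum_const, nsmul_eq_mul]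
    _ ≤ ∑ n ∈ Icc 1 x with j ≤ #{p ∈ P | p ∣ n}, z ^ #{p ∈ P | p ∣ n} :=
        sum_le_sum fun n hn => pow_le_pow_right₀ hz (mem_filter.mp hn).2
    _ ≤ ∑ n ∈ Icc 1 x, z ^ #{p ∈ P | p ∣ n} :=
        sum_le_sum_of_subset_of_nonneg (filter_subset _ _) fun _ _ _ => by positivity
    _ ≤ x * ∏ p ∈ P, (1 + (z - 1) / p) := sum_pow_card_filter_dvd_le hP hz x

end Rankin

/-! ### Counting crowded integers -/

/-- Rankin's bound, with weight `5`, for the proportion of integers crowded at level `j`. -/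
noncomputable def crowdedBound (j : ℕ) : ℝ :=
  (∏ p ∈ oddPrimesBelow (2 ^ j), (1 + 4 / (p : ℝ))) / 5 ^ j

lemma crowdedBound_nonneg (j : ℕ) : 0 ≤ crowdedBound j := by
  unfold crowdedBound
  positivity

lemma card_crowdedAt_le (j x : ℕ) : (#{n ∈ Icc 1 x | CrowdedAt j n} : ℝ) ≤ x * crowdedBound j := by
  have hcop : (oddPrimesBelow (2 ^ j) : Set ℕ).Pairwise Nat.Coprime := fun p hp q hq =>
    (Nat.coprime_primes (mem_oddPrimesBelow.mp hp).2.2 (mem_oddPrimesBelow.mp hq).2.2).mpr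
  have := card_filter_le_card_filter_dvd_le hcop (z := 5) (by norm_num) j x
  rwa [show (5 : ℝ) - 1 = 4 by norm_num] at this

lemma prod_Ico_div₀ {G₀ : Type*} [CommGroupWithZero G₀] {f : ℕ → G₀} {m n : ℕ} (hmn : m ≤ n)
    (hf : ∀ k, m ≤ k → f k ≠ 0) : ∏ k ∈ Ico m n, f (k + 1) / f k = f n / f m := by
  induction n, hmn using Nat.le_induction with
  | base => rw [Ico_self, prod_empty, div_self (hf m le_rfl)]
  | succ n hn ih => rw [prod_Ico_succ_top hn, ih, mul_comm, div_mul_div_cancel₀ (hf n hn)]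

/-- For `p = 2 * k + 1` the factor is at most `((k + 1) / k) ^ 2`, whose product telescopes. -/
lemma prod_oddPrimesBelow_sdiff_le {a : ℕ} (ha : 0 < a) :
    ∏ p ∈ oddPrimesBelow (4 * a) \ oddPrimesBelow (2 * a), (1 + 4 / (p : ℝ)) ≤ 4 := by
  have hsub : oddPrimesBelow (4 * a) \ oddPrimesBelow (2 * a) ⊆
      (Ico a (2 * a)).image (fun k : ℕ => 2 * k + 1) := fun p hp => by
    simp only [mem_sdiff, mem_oddPrimesBelow, not_and'] at hp
    obtain ⟨⟨hp2, hlt, hprime⟩, hge⟩ := hp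
    obtain ⟨k, rfl⟩ := hprime.odd_of_ne_two hp2
    have : ¬ 2 * k + 1 < 2 * a := fun h => hge ⟨h, hprime⟩ hp2
    exact mem_image.mpr ⟨k, mem_Ico.mpr (by omega), rfl⟩
  have hfactor : ∀ k ∈ Ico a (2 * a),
      1 + 4 / ((2 * k + 1 : ℕ) : ℝ) ≤ (((k + 1 : ℕ) : ℝ) / k) ^ 2 := fun k hk => by
    have hk0 : (0 : ℝ) < k := by exact_mod_cast ha.trans_le (mem_Ico.mp hk).1
    push_cast
    rw [one_add_div (by positivity), div_pow, div_le_div_iff₀ (by positivity) (by positivity)]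
    nlinarith
  calc ∏ p ∈ oddPrimesBelow (4 * a) \ oddPrimesBelow (2 * a), (1 + 4 / (p : ℝ))
      ≤ ∏ p ∈ (Ico a (2 * a)).image (fun k : ℕ => 2 * k + 1), (1 + 4 / (p : ℝ)) :=
        prod_le_prod_of_subset_of_one_le hsub (fun p _ => by positivity) fun p _ _ =>
          le_add_of_nonneg_right (by positivity)
    _ = ∏ k ∈ Ico a (2 * a), (1 + 4 / ((2 * k + 1 : ℕ) : ℝ)) :=
        prod_image fun k _ l _ h => by omega
    _ ≤ ∏ k ∈ Ico a (2 * a), (((k + 1 : ℕ) : ℝ) / k) ^ 2 :=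
        prod_le_prod (fun k _ => by positivity) hfactor
    _ = (((2 * a : ℕ) : ℝ) / a) ^ 2 := by
        rw [prod_pow, prod_Ico_div₀ (f := fun k : ℕ => (k : ℝ)) (by omega)
          fun k hk => Nat.cast_ne_zero.mpr (by omega)]
    _ = 4 := by
        have : (a : ℝ) ≠ 0 := by positivity
        push_cast
        field_simp
        norm_num

lemma crowdedBound_succ_le {j : ℕ} (hj : 0 < j) :
    crowdedBound (j + 1) ≤ 4 / 5 * crowdedBound j := by
  obtain ⟨i, rfl⟩ : ∃ i, j = i + 1 := Nat.exists_eq_succ_of_ne_zero hj.ne'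
  have hprod := prod_oddPrimesBelow_sdiff_le (Nat.two_pow_pos i)
  rw [show 4 * 2 ^ i = 2 ^ (i + 1 + 1) by ring, show 2 * 2 ^ i = 2 ^ (i + 1) by ring] at hprod
  have hsub : oddPrimesBelow (2 ^ (i + 1)) ⊆ oddPrimesBelow (2 ^ (i + 1 + 1)) :=
    oddPrimesBelow_mono (Nat.pow_le_pow_right two_pos (Nat.le_succ _))
  calc crowdedBound (i + 1 + 1)
      = (∏ p ∈ oddPrimesBelow (2 ^ (i + 1 + 1)) \ oddPrimesBelow (2 ^ (i + 1)),
          (1 + 4 / (p : ℝ))) / 5 * crowdedBound (i + 1) := by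
        rw [crowdedBound, crowdedBound, ← prod_sdiff hsub, pow_succ' 5, mul_div_mul_comm]
    _ ≤ 4 / 5 * crowdedBound (i + 1) := by
        gcongr
        exact crowdedBound_nonneg _

lemma sum_Ico_crowdedBound_le {m n : ℕ} (hm : 0 < m) (hmn : m ≤ n) :
    ∑ j ∈ Ico m n, crowdedBound j ≤ 5 * crowdedBound m := by
  calc ∑ j ∈ Ico m n, crowdedBound j
      ≤ ∑ j ∈ Ico m n, (-5 * crowdedBound (j + 1) - -5 * crowdedBound j) :=
        sum_le_sum fun j hj => by
          linarith [crowdedBound_succ_le (hm.trans_le (mem_Ico.mp hj).1)]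
    _ = -5 * crowdedBound n - -5 * crowdedBound m :=
        sum_Ico_sub (fun j => -5 * crowdedBound j) hmn
    _ ≤ 5 * crowdedBound m := by linarith [crowdedBound_nonneg n]

lemma sum_small_crowdedBound_le :
    crowdedBound 3 + (crowdedBound 4 + 5 * crowdedBound 5) ≤ 1 / 8 := by
  have h3 : oddPrimesBelow (2 ^ 3) = {3, 5, 7} := by decide
  have h4 : oddPrimesBelow (2 ^ 4) = {3, 5, 7, 11, 13} := by decide
  have h5 : oddPrimesBelow (2 ^ 5) = {3, 5, 7, 11, 13, 17, 19, 23, 29, 31} := by decide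
  unfold crowdedBound
  rw [h3, h4, h5]
  norm_num [prod_insert]

open Classical in
lemma card_exists_crowdedAt_le (x : ℕ) :
    (#{n ∈ Icc 1 x | ∃ j, 0 < j ∧ CrowdedAt j n} : ℝ) ≤ 1 / 8 * x := by
  have hsub : {n ∈ Icc 1 x | ∃ j, 0 < j ∧ CrowdedAt j n} ⊆
      (Ico 3 (x + 5)).biUnion fun j => {n ∈ Icc 1 x | CrowdedAt j n} := fun n hn => by
    obtain ⟨hnx, j, hj, hcrowded⟩ := mem_filter.mp hn
    obtain ⟨hn1, hle⟩ := mem_Icc.mp hnx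
    have hjn := hcrowded.level_le hn1
    exact mem_biUnion.mpr ⟨j, mem_Ico.mpr ⟨hcrowded.three_le hj, by omega⟩,
      mem_filter.mpr ⟨hnx, hcrowded⟩⟩
  calc (#{n ∈ Icc 1 x | ∃ j, 0 < j ∧ CrowdedAt j n} : ℝ)
      ≤ ∑ j ∈ Ico 3 (x + 5), (#{n ∈ Icc 1 x | CrowdedAt j n} : ℝ) := by
        exact_mod_cast (card_le_card hsub).trans card_biUnion_le
    _ ≤ ∑ j ∈ Ico 3 (x + 5), x * crowdedBound j := sum_le_sum fun j _ => card_crowdedAt_le j x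
    _ = x * (crowdedBound 3 + (crowdedBound 4 + ∑ j ∈ Ico 5 (x + 5), crowdedBound j)) := by
        rw [← mul_sum, sum_eq_sum_Ico_succ_bot (by omega), sum_eq_sum_Ico_succ_bot (by omega)]
    _ ≤ x * (crowdedBound 3 + (crowdedBound 4 + 5 * crowdedBound 5)) := by
        gcongr
        exact sum_Ico_crowdedBound_le (by norm_num) (by omega)
    _ ≤ x * (1 / 8) := by
        gcongr
        exact sum_small_crowdedBound_le
    _ = 1 / 8 * x := mul_comm _ _

/-! ### Counting nonsquarefree integers -/

lemma sum_Ico_one_div_odd_sq_le {m n : ℕ} (hm : 0 < m) (hmn : m ≤ n) :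
    ∑ k ∈ Ico m n, (1 : ℝ) / (2 * k + 1) ^ 2 ≤ 1 / (4 * (m : ℝ)) := by
  have hterm : ∀ k ∈ Ico m n,
      (1 : ℝ) / (2 * k + 1) ^ 2 ≤ -1 / (4 * ((k + 1 : ℕ) : ℝ)) - -1 / (4 * (k : ℝ)) := by
    intro k hk
    have hk0 : (0 : ℝ) < k := by exact_mod_cast hm.trans_le (mem_Ico.mp hk).1
    have hdiff : -1 / (4 * ((k + 1 : ℕ) : ℝ)) - -1 / (4 * k) = 1 / (4 * (k * (k + 1))) := by
      push_cast
      field_simp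
      ring
    rw [hdiff]
    exact one_div_le_one_div_of_le (by positivity) (by nlinarith)
  calc ∑ k ∈ Ico m n, (1 : ℝ) / (2 * k + 1) ^ 2
      ≤ ∑ k ∈ Ico m n, (-1 / (4 * ((k + 1 : ℕ) : ℝ)) - -1 / (4 * k)) := sum_le_sum hterm
    _ = -1 / (4 * n) - -1 / (4 * m) := sum_Ico_sub (fun k : ℕ => -1 / (4 * (k : ℝ))) hmn
    _ = 1 / (4 * m) - 1 / (4 * n) := by ring
    _ ≤ 1 / (4 * m) := sub_le_self _ (by positivity)

lemma four_dvd_or_odd_sq_dvd_of_not_squarefree {n : ℕ} (hn : ¬ Squarefree n) :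
    4 ∣ n ∨ ∃ k, 0 < k ∧ (2 * k + 1) ^ 2 ∣ n := by
  rw [Nat.squarefree_iff_prime_squarefree] at hn
  push Not at hn
  obtain ⟨p, hp, hdvd⟩ := hn
  rcases hp.eq_two_or_odd' with rfl | ⟨k, rfl⟩
  · exact Or.inl hdvd
  · have := hp.one_lt
    exact Or.inr ⟨k, by omega, by rwa [sq]⟩

lemma card_not_squarefree_le (x : ℕ) : (#{n ∈ Icc 1 x | ¬ Squarefree n} : ℝ) ≤ 1 / 2 * x := by
  have hsub : {n ∈ Icc 1 x | ¬ Squarefree n} ⊆ {n ∈ Icc 1 x | 4 ∣ n} ∪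
      (Ico 1 (x + 1)).biUnion fun k => {n ∈ Icc 1 x | (2 * k + 1) ^ 2 ∣ n} := fun n hn => by
    obtain ⟨hnx, hnsq⟩ := mem_filter.mp hn
    obtain ⟨hn1, hle⟩ := mem_Icc.mp hnx
    rcases four_dvd_or_odd_sq_dvd_of_not_squarefree hnsq with h4 | ⟨k, hk, hdvd⟩
    · exact mem_union_left _ (mem_filter.mpr ⟨hnx, h4⟩)
    · have := Nat.le_of_dvd hn1 hdvd
      exact mem_union_right _ (mem_biUnion.mpr
        ⟨k, mem_Ico.mpr ⟨hk, by nlinarith⟩, mem_filter.mpr ⟨hnx, hdvd⟩⟩)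
  calc (#{n ∈ Icc 1 x | ¬ Squarefree n} : ℝ)
      ≤ #{n ∈ Icc 1 x | 4 ∣ n} +
          ∑ k ∈ Ico 1 (x + 1), (#{n ∈ Icc 1 x | (2 * k + 1) ^ 2 ∣ n} : ℝ) := by
        exact_mod_cast (card_le_card hsub).trans
          ((card_union_le _ _).trans (Nat.add_le_add_left card_biUnion_le _))
    _ ≤ x / (4 : ℕ) + ∑ k ∈ Ico 1 (x + 1), x / (((2 * k + 1) ^ 2 : ℕ) : ℝ) :=
        add_le_add (card_filter_dvd_le x 4) (sum_le_sum fun k _ => card_filter_dvd_le x _)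
    _ = x * (1 / 4 + ∑ k ∈ Ico 1 (x + 1), (1 : ℝ) / (2 * k + 1) ^ 2) := by
        rw [mul_add, mul_sum]
        push_cast
        simp only [mul_one_div]
    _ ≤ x * (1 / 4 + 1 / (4 * (1 : ℕ))) := by
        gcongr
        exact sum_Ico_one_div_odd_sq_le one_pos (by omega)
    _ = 1 / 2 * x := by push_cast; ring

/-! ### The lower density -/

open Classical in
lemma card_stronglyMatchable_ge (x : ℕ) :
    3 / 8 * (x : ℝ) ≤ #{n ∈ Icc 1 x | StronglyMatchable n} := by
  have hsub : Icc 1 x ⊆ {n ∈ Icc 1 x | StronglyMatchable n} ∪ ({n ∈ Icc 1 x | ¬ Squarefree n} ∪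
      {n ∈ Icc 1 x | ∃ j, 0 < j ∧ CrowdedAt j n}) := fun n hn => by
    simp only [mem_union, mem_filter, hn, true_and]
    by_contra! h
    exact h.1 (stronglyMatchable_of_squarefree h.2.1 h.2.2)
  have hcard := (card_le_card hsub).trans
    ((card_union_le _ _).trans (Nat.add_le_add_left (card_union_le _ _) _))
  rw [Nat.card_Icc, Nat.add_sub_cancel] at hcard
  have hcard' : (x : ℝ) ≤ #{n ∈ Icc 1 x | StronglyMatchable n} + (#{n ∈ Icc 1 x | ¬ Squarefree n} +
      #{n ∈ Icc 1 x | ∃ j, 0 < j ∧ CrowdedAt j n}) := by exact_mod_cast hcard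
  linarith [card_not_squarefree_le x, card_exists_crowdedAt_le x]

lemma le_liminf_card_filter_div {P : ℕ → Prop} [DecidablePred P] {c : ℝ}
    (h : ∀ x : ℕ, c * x ≤ #{n ∈ Icc 1 x | P n}) :
    c ≤ Filter.liminf (fun x : ℕ => (#{n ∈ Icc 1 x | P n} : ℝ) / x) Filter.atTop := by
  have hle_one : ∀ x : ℕ, (#{n ∈ Icc 1 x | P n} : ℝ) / x ≤ 1 := fun x =>
    div_le_one_of_le₀ (by exact_mod_cast (card_filter_le _ _).trans_eq (Nat.card_Icc 1 x))
      x.cast_nonneg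
  refine Filter.le_liminf_of_le
    (Filter.isBoundedUnder_of ⟨1, hle_one⟩ :
      Filter.IsBoundedUnder (· ≤ ·) _ _).isCoboundedUnder_ge ?_
  filter_upwards [Filter.eventually_gt_atTop 0] with x hx
  exact (le_div_iff₀ (by exact_mod_cast hx)).mpr (h x)

end

open Classical in
theorem stmt_17 :
    (4 : ℝ) / 11 <
      Filter.liminf
        (fun x : ℕ =>
          (((Finset.Icc 1 x).filter (fun n => StronglyMatchable n)).card : ℝ) / (x : ℝ))
        Filter.atTop :=
  (by norm_num : (4 : ℝ) / 11 < 3 / 8).trans_le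
    (le_liminf_card_filter_div card_stronglyMatchable_ge)
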